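/- arXiv:2501.01839 — 6 statements merged into one kernel-verified Lean document; each statement's English description precedes it below -/
import Mathlib

section
/- Let n ≥ 1 and let N and M be n×n complex matrices. The pair (N, M) satisfies the Kalman rank condition if and only if it satisfies the Shizuta–Kawashima condition (SK). -/
open Matrix

/-- The Shizuta–Kawashima condition: the only vector `φ` with `M φ = 0` and
`λ φ + N φ = 0` for some `λ ∈ ℂ` is `φ = 0`. -/
def SKCondition {m : Type*} [Fintype m] (N M : Matrix m m ℂ) : Prop :=
  ∀ (φ : m → ℂ) (l : ℂ), M.mulVec φ = 0 → l • φ + N.mulVec φ = 0 → φ = 0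

/-- The Kalman rank condition: the `n²×n` matrix obtained by stacking
`M, MN, MN², …, MN^{n-1}` vertically has rank `n`. -/
def KalmanRank (n : ℕ) (N M : Matrix (Fin n) (Fin n) ℂ) : Prop :=
  (Matrix.of fun p : Fin n × Fin n => fun j : Fin n =>
    (M * N ^ (p.1 : ℕ)) p.2 j).rank = n

/-- kernel of all the `M N^k` -/
def kalmanKer {n : ℕ} (N M : Matrix (Fin n) (Fin n) ℂ) : Submodule ℂ (Fin n → ℂ) :=
  ⨅ k : ℕ, LinearMap.ker (Matrix.mulVecLin (M * N ^ k))

theorem mem_kalmanKer {n : ℕ} (N M : Matrix (Fin n) (Fin n) ℂ) (v : Fin n → ℂ) :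
    v ∈ kalmanKer N M ↔ ∀ k : ℕ, (M * N ^ k) *ᵥ v = 0 := by
  simp [kalmanKer, Submodule.mem_iInf]

theorem mem_kalmanKer_of_lt {n : ℕ} (N M : Matrix (Fin n) (Fin n) ℂ) (v : Fin n → ℂ)
    (h : ∀ k : ℕ, k < n → (M * N ^ k) *ᵥ v = 0) : v ∈ kalmanKer N M := by
  rw [mem_kalmanKer]
  intro k
  by_cases hn : n = 0
  · subst hn
    exact Subsingleton.elim _ _
  haveI : Nonempty (Fin n) := ⟨⟨0, Nat.pos_of_ne_zero hn⟩⟩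
  have hd : ((Polynomial.X ^ k : Polynomial ℂ) %ₘ N.charpoly).natDegree < n := by
    have h1 := Polynomial.natDegree_modByMonic_lt (Polynomial.X ^ k : Polynomial ℂ)
      N.charpoly_monic (by
        intro h1
        have h2 := N.charpoly_natDegree_eq_dim
        rw [h1] at h2
        simp at h2
        omega)
    rwa [N.charpoly_natDegree_eq_dim, Fintype.card_fin] at h1
  rw [Matrix.pow_eq_aeval_mod_charpoly, Polynomial.aeval_eq_sum_range' hd, Finset.mul_sum,
    Matrix.sum_mulVec]
  refine Finset.sum_eq_zero fun i hi => ?_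
  rw [Matrix.mul_smul, Matrix.smul_mulVec, h i (Finset.mem_range.1 hi), smul_zero]

theorem kalmanRank_iff_ker (n : ℕ) (N M : Matrix (Fin n) (Fin n) ℂ) :
    KalmanRank n N M ↔ kalmanKer N M = ⊥ := by
  unfold KalmanRank
  set K : Matrix (Fin n × Fin n) (Fin n) ℂ := Matrix.of fun p : Fin n × Fin n => fun j : Fin n =>
    (M * N ^ (p.1 : ℕ)) p.2 j with hK
  have hker : LinearMap.ker K.mulVecLin = kalmanKer N M := by
    ext v
    rw [LinearMap.mem_ker, Matrix.mulVecLin_apply]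
    constructor
    · intro h
      refine mem_kalmanKer_of_lt N M v fun k hk => ?_
      ext i
      exact congrFun h (⟨k, hk⟩, i)
    · intro h
      rw [mem_kalmanKer] at h
      ext p
      exact congrFun (h p.1) p.2
  have hr := LinearMap.finrank_range_add_finrank_ker K.mulVecLin
  rw [hker, Module.finrank_fin_fun] at hr
  rw [← Submodule.finrank_eq_zero (R := ℂ), Matrix.rank]
  omega

theorem kalmanRank_iff_SKCondition (n : ℕ) (hn : 1 ≤ n)
    (N M : Matrix (Fin n) (Fin n) ℂ) :
    KalmanRank n N M ↔ SKCondition N M := by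
  rw [kalmanRank_iff_ker]
  constructor
  · intro h φ l hM hN
    have hN' : N *ᵥ φ = (-l) • φ := by
      rw [neg_smul]
      exact eq_neg_of_add_eq_zero_right hN
    have hp : ∀ k : ℕ, (N ^ k) *ᵥ φ = ((-l) ^ k) • φ := by
      intro k
      induction k with
      | zero => simp
      | succ k ih =>
        rw [pow_succ, ← Matrix.mulVec_mulVec, hN', Matrix.mulVec_smul, ih, smul_smul, pow_succ,
          mul_comm]
    have : φ ∈ kalmanKer N M := by
      rw [mem_kalmanKer]
      intro k
      rw [← Matrix.mulVec_mulVec, hp, Matrix.mulVec_smul, hM, smul_zero]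
    rw [h] at this
    simpa using this
  · intro h
    by_contra hne
    have hinv : ∀ v ∈ kalmanKer N M, N.mulVecLin v ∈ kalmanKer N M := by
      intro v hv
      rw [mem_kalmanKer] at hv ⊢
      intro k
      have := hv (k + 1)
      rwa [pow_succ, ← mul_assoc, ← Matrix.mulVec_mulVec] at this
    haveI : Nontrivial (kalmanKer N M) := Submodule.nontrivial_iff_ne_bot.2 hne
    obtain ⟨μ, hμ⟩ := Module.End.exists_eigenvalue (N.mulVecLin.restrict hinv)
    obtain ⟨w, hw⟩ := hμ.exists_hasEigenvector
    have h1 := congrArg Subtype.val hw.apply_eq_smul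
    have h2 : N *ᵥ (w : Fin n → ℂ) = μ • (w : Fin n → ℂ) := h1
    have h3 := (mem_kalmanKer N M w).1 w.2 0
    rw [pow_zero, mul_one] at h3
    apply hw.2
    apply Subtype.ext
    exact h w (-μ) h3 (by rw [h2, neg_smul, neg_add_cancel])
end

section
/- Let n₁, n₂ be nonnegative integers with n = n₁ + n₂. Let M₂₂ be an n₂×n₂ complex matrix, N₁₁ an n₁×n₁ complex matrix, N₂₂ an n₂×n₂ complex matrix, and N₂₁ an n₂×n₁ complex matrix, and set N₁₂ equal to the conjugate transpose of N₂₁. Define the n×n block matrices M = [[0, 0], [0, M₂₂]] and N = [[N₁₁, N₁₂], [N₂₁, N₂₂]]. Let Q be an n₂×n₂ complex matrix such that Re(⟨Qη, η⟩) ≠ 0 for every nonzero η ∈ ℂ^{n₂}. If the pair (N, M) satisfies the (SK) condition, then the pair (N₁₁, N₁₂ Q N₂₁) also satisfies the (SK) condition. -/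
open Matrix

theorem sk_block_to_reduced (n₁ n₂ : ℕ)
    (M₂₂ : Matrix (Fin n₂) (Fin n₂) ℂ)
    (N₁₁ : Matrix (Fin n₁) (Fin n₁) ℂ) (N₂₂ : Matrix (Fin n₂) (Fin n₂) ℂ)
    (N₂₁ : Matrix (Fin n₂) (Fin n₁) ℂ)
    (Q : Matrix (Fin n₂) (Fin n₂) ℂ)
    (hQ : ∀ η : Fin n₂ → ℂ, η ≠ 0 → (star η ⬝ᵥ Q.mulVec η).re ≠ 0)
    (hSK : SKCondition (Matrix.fromBlocks N₁₁ N₂₁ᴴ N₂₁ N₂₂)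
        (Matrix.fromBlocks 0 0 0 M₂₂)) :
    SKCondition N₁₁ (N₂₁ᴴ * Q * N₂₁) := by
  intro φ l hM hN
  have hη : N₂₁.mulVec φ = 0 := by
    by_contra h
    apply hQ _ h
    have h0 : star (N₂₁.mulVec φ) ⬝ᵥ Q.mulVec (N₂₁.mulVec φ)
        = star φ ⬝ᵥ (N₂₁ᴴ * Q * N₂₁).mulVec φ := by
      rw [Matrix.star_mulVec, ← Matrix.dotProduct_mulVec, Matrix.mulVec_mulVec,
        Matrix.mulVec_mulVec, Matrix.mul_assoc]
    rw [h0, hM]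
    simp
  have key := hSK (Sum.elim φ 0) l
    (by
      rw [Matrix.fromBlocks_mulVec]
      ext i
      cases i <;> simp)
    (by
      rw [Matrix.fromBlocks_mulVec]
      ext i
      cases i with
      | inl i => simpa using congrFun hN i
      | inr i => simpa using congrFun hη i)
  ext i
  simpa using congrFun key (Sum.inl i)
end

section
/- Let n₁, n₂ be nonnegative integers with n = n₁ + n₂. Let M₂₂ be an invertible n₂×n₂ complex matrix, N₁₁ an n₁×n₁ complex matrix, N₂₂ an n₂×n₂ complex matrix, and N₂₁ an n₂×n₁ complex matrix, and set N₁₂ equal to the conjugate transpose of N₂₁. Define the n×n block matrices M = [[0, 0], [0, M₂₂]] and N = [[N₁₁, N₁₂], [N₂₁, N₂₂]]. Let Q be an n₂×n₂ complex matrix such that Re(⟨Qη, η⟩) ≠ 0 for every nonzero η ∈ ℂ^{n₂}. If the pair (N₁₁, N₁₂ Q N₂₁) satisfies the (SK) condition, then the pair (N, M) also satisfies the (SK) condition. -/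
open Matrix

theorem sk_reduced_to_block (n₁ n₂ : ℕ)
    (M₂₂ : Matrix (Fin n₂) (Fin n₂) ℂ) (hM₂₂ : IsUnit M₂₂)
    (N₁₁ : Matrix (Fin n₁) (Fin n₁) ℂ) (N₂₂ : Matrix (Fin n₂) (Fin n₂) ℂ)
    (N₂₁ : Matrix (Fin n₂) (Fin n₁) ℂ)
    (Q : Matrix (Fin n₂) (Fin n₂) ℂ)
    (hQ : ∀ η : Fin n₂ → ℂ, η ≠ 0 → (star η ⬝ᵥ Q.mulVec η).re ≠ 0)
    (hSK : SKCondition N₁₁ (N₂₁ᴴ * Q * N₂₁)) :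
    SKCondition (Matrix.fromBlocks N₁₁ N₂₁ᴴ N₂₁ N₂₂)
      (Matrix.fromBlocks 0 0 0 M₂₂) := by
  intro φ l hM hN
  obtain ⟨x, y, rfl⟩ : ∃ x y, φ = Sum.elim x y :=
    ⟨φ ∘ Sum.inl, φ ∘ Sum.inr, (Sum.elim_comp_inl_inr φ).symm⟩
  have hy : y = 0 := by
    apply Matrix.mulVec_injective_of_isUnit hM₂₂
    ext i
    have := congrFun hM (Sum.inr i)
    simpa [Matrix.fromBlocks_mulVec] using this
  subst hy
  have h2 : N₂₁.mulVec x = 0 := by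
    ext i
    have := congrFun hN (Sum.inr i)
    simpa [Matrix.fromBlocks_mulVec, Function.comp_def, ← Pi.zero_def] using this
  have h1 : l • x + N₁₁.mulVec x = 0 := by
    ext i
    have := congrFun hN (Sum.inl i)
    simpa [Matrix.fromBlocks_mulVec, Function.comp_def, ← Pi.zero_def] using this
  have hx : x = 0 := by
    refine hSK x l ?_ h1
    rw [← Matrix.mulVec_mulVec, h2, Matrix.mulVec_zero]
  subst hx
  ext i
  cases i <;> rfl
end

section
/- Let T > 0, let X : [0, T] → ℝ be a continuous, nonnegative and differentiable function, let B ≥ 0 be a constant, and let A : [0, T] → ℝ be a nonnegative integrable function such that (1/2) X'(t) + B X(t) ≤ A(t) X(t)^{1/2} for almost every t in [0, T]. Then for all t ∈ [0, T] one has X(t)^{1/2} + B ∫₀ᵗ X(s)^{1/2} ds ≤ X(0)^{1/2} + ∫₀ᵗ A(s) ds. -/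
open MeasureTheory

theorem sqrt_differential_inequality (T : ℝ) (hT : 0 < T)
    (X X' A : ℝ → ℝ) (B : ℝ) (hB : 0 ≤ B)
    (hXcont : ContinuousOn X (Set.Icc 0 T))
    (hXnonneg : ∀ t ∈ Set.Icc 0 T, 0 ≤ X t)
    (hXderiv : ∀ t ∈ Set.Icc 0 T, HasDerivWithinAt X (X' t) (Set.Icc 0 T) t)
    (hAnonneg : ∀ t ∈ Set.Icc 0 T, 0 ≤ A t)
    (hAint : IntegrableOn A (Set.Icc 0 T))
    (hineq : ∀ᵐ t ∂(volume.restrict (Set.Icc 0 T)),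
      (1 / 2) * X' t + B * X t ≤ A t * Real.sqrt (X t)) :
    ∀ t ∈ Set.Icc 0 T,
      Real.sqrt (X t) + B * ∫ s in (0 : ℝ)..t, Real.sqrt (X s) ≤
        Real.sqrt (X 0) + ∫ s in (0 : ℝ)..t, A s := by
  intro t ht
  have hsub : Set.Icc 0 t ⊆ Set.Icc 0 T := Set.Icc_subset_Icc_right ht.2
  have hscont : ContinuousOn (fun s => Real.sqrt (X s)) (Set.Icc 0 t) :=
    (hXcont.mono hsub).sqrt
  have hsint : IntegrableOn (fun s => Real.sqrt (X s)) (Set.Icc 0 t) :=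
    hscont.integrableOn_Icc
  have hAint' : IntegrableOn A (Set.Icc 0 t) := hAint.mono_set hsub
  have hI1 : IntervalIntegrable (fun s => Real.sqrt (X s)) volume 0 t :=
    (intervalIntegrable_iff_integrableOn_Icc_of_le ht.1).2 hsint
  have hI2 : IntervalIntegrable A volume 0 t :=
    (intervalIntegrable_iff_integrableOn_Icc_of_le ht.1).2 hAint'
  have hineq' : ∀ᵐ s ∂(volume.restrict (Set.Icc 0 t)),
      (1 / 2) * X' s + B * X s ≤ A s * Real.sqrt (X s) :=
    ae_restrict_of_ae_restrict_of_subset hsub hineq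
  have key : ∀ δ : ℝ, 0 < δ → Real.sqrt (X t) + B * ∫ s in (0 : ℝ)..t, Real.sqrt (X s) ≤
        Real.sqrt (X 0) + (∫ s in (0 : ℝ)..t, A s) + δ * (1 + B * t) := by
    intro δ hδ
    set bd : ℝ → ℝ := fun s => A s - B * Real.sqrt (X s) + B * δ with hbd
    set Y : ℝ → ℝ := fun s => Real.sqrt (X s + δ ^ 2) with hY
    set Y' : ℝ → ℝ := fun s => X' s / (2 * Real.sqrt (X s + δ ^ 2)) with hY'
    have hpt : ∀ s ∈ Set.Icc 0 T, (1 / 2) * X' s + B * X s ≤ A s * Real.sqrt (X s) →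
        Y' s ≤ bd s := by
      intro s hs h
      have hX := hXnonneg s hs
      have hA := hAnonneg s hs
      have h1 : 0 < Real.sqrt (X s + δ ^ 2) := Real.sqrt_pos.2 (by positivity)
      have h2 : Real.sqrt (X s) ≤ Real.sqrt (X s + δ ^ 2) :=
        Real.sqrt_le_sqrt (by nlinarith)
      have h3 : δ ≤ Real.sqrt (X s + δ ^ 2) := Real.le_sqrt_of_sq_le (by linarith)
      have h4 : Real.sqrt (X s + δ ^ 2) ^ 2 = X s + δ ^ 2 := Real.sq_sqrt (by positivity)
      simp only [hY', hbd]
      rw [div_le_iff₀ (by positivity)]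
      generalize Real.sqrt (X s + δ ^ 2) = r at *
      generalize Real.sqrt (X s) = q at *
      have e1 : A s * q ≤ A s * r := mul_le_mul_of_nonneg_left h2 hA
      have e2 : B * (q * r - δ * r) ≤ B * X s := by
        apply mul_le_mul_of_nonneg_left _ hB
        nlinarith
      nlinarith
    set φ : ℝ → ℝ := fun s => max (Y' s) (bd s) with hφ
    have hae : bd =ᵐ[volume.restrict (Set.Icc 0 t)] φ := by
      filter_upwards [hineq', ae_restrict_mem measurableSet_Icc] with s h hs
      exact (max_eq_right (hpt s (hsub hs) h)).symm
    have hbdint : IntegrableOn bd (Set.Icc 0 t) :=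
      (hAint'.sub (hsint.const_mul B)).add
        (continuousOn_const (c := B * δ)).integrableOn_Icc
    have hφint : IntegrableOn φ (Set.Icc 0 t) := hbdint.congr hae
    have main := intervalIntegral.sub_le_integral_of_hasDeriv_right_of_le (g := Y) (g' := Y')
      (φ := φ) ht.1 ((hXcont.mono hsub).add continuousOn_const).sqrt
      (fun s hs => by
        have hs' : s ∈ Set.Icc 0 T := hsub ⟨hs.1.le, hs.2.le⟩
        have hd : HasDerivAt X (X' s) s := (hXderiv s hs').hasDerivAt
          (Icc_mem_nhds hs.1 (hs.2.trans_le ht.2))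
        have hX := hXnonneg s hs'
        exact ((hd.add_const (δ ^ 2)).sqrt (by positivity)).hasDerivWithinAt)
      hφint (fun s _ => le_max_left _ _)
    have hEq : ∫ s in (0 : ℝ)..t, φ s = ∫ s in (0 : ℝ)..t, bd s := by
      rw [intervalIntegral.integral_of_le ht.1, intervalIntegral.integral_of_le ht.1,
        ← integral_Icc_eq_integral_Ioc, ← integral_Icc_eq_integral_Ioc]
      exact integral_congr_ae hae.symm
    have hval : ∫ s in (0 : ℝ)..t, bd s = (∫ s in (0 : ℝ)..t, A s)
        - B * (∫ s in (0 : ℝ)..t, Real.sqrt (X s)) + t * (B * δ) := by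
      simp only [hbd]
      rw [intervalIntegral.integral_add (hI2.sub (hI1.const_mul B)) (by simp),
        intervalIntegral.integral_sub hI2 (hI1.const_mul B),
        intervalIntegral.integral_const_mul, intervalIntegral.integral_const]
      simp
    rw [hEq, hval] at main
    have hX0 := hXnonneg 0 ⟨le_rfl, hT.le⟩
    have a1 : Real.sqrt (X t) ≤ Y t := Real.sqrt_le_sqrt (by nlinarith)
    have a2 : Y 0 ≤ Real.sqrt (X 0) + δ := by
      apply Real.sqrt_le_iff.2
      have := Real.sqrt_nonneg (X 0)
      refine ⟨by positivity, ?_⟩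
      nlinarith [Real.sq_sqrt hX0]
    linarith
  have hc : 0 < 1 + B * t := by have := mul_nonneg hB ht.1; linarith
  refine le_of_forall_pos_le_add fun ε hε => ?_
  have := key (ε / (1 + B * t)) (by positivity)
  rwa [div_mul_cancel₀ _ hc.ne'] at this
end

section
/- Let 0 < θ < 1, c > 0 and C₀ > 0, and let L : [0, ∞) → [0, ∞) be a differentiable function satisfying L'(t) + c · C₀^{-θ/(1-θ)} · L(t)^{1/(1-θ)} ≤ 0 for all t ≥ 0. Then for all t ≥ 0 one has L(t) ≤ (1 + c · (θ/(1-θ)) · (L(0)/C₀)^{θ/(1-θ)} · t)^{-(1-θ)/θ} · L(0). -/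
theorem lyapunov_polynomial_decay (θ c C₀ : ℝ)
    (hθ0 : 0 < θ) (hθ1 : θ < 1) (hc : 0 < c) (hC₀ : 0 < C₀)
    (L L' : ℝ → ℝ)
    (hLnonneg : ∀ t : ℝ, 0 ≤ t → 0 ≤ L t)
    (hLderiv : ∀ t : ℝ, 0 ≤ t → HasDerivAt L (L' t) t)
    (hineq : ∀ t : ℝ, 0 ≤ t →
      L' t + c * C₀ ^ (-(θ / (1 - θ))) * L t ^ (1 / (1 - θ)) ≤ 0) :
    ∀ t : ℝ, 0 ≤ t →
      L t ≤ (1 + c * (θ / (1 - θ)) * (L 0 / C₀) ^ (θ / (1 - θ)) * t)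
              ^ (-(1 - θ) / θ) * L 0 := by
  intro t ht
  have h1 : 0 < 1 - θ := by linarith
  have e1 : 1 / (1 - θ) = θ / (1 - θ) + 1 := by field_simp; ring
  have e2 : -(1 - θ) / θ = -(θ / (1 - θ))⁻¹ := by rw [inv_div]; ring
  have hp : 0 < θ / (1 - θ) := by positivity
  rw [e1] at hineq
  rw [e2]
  generalize θ / (1 - θ) = p at *
  have hL0 := hLnonneg 0 le_rfl
  have hbase : 0 < 1 + c * p * (L 0 / C₀) ^ p * t := by positivity
  rcases (hLnonneg t ht).eq_or_lt with h0 | hpos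
  · rw [← h0]; positivity
  have hanti : AntitoneOn L (Set.Ici 0) := by
    refine antitoneOn_of_hasDerivWithinAt_nonpos (f' := L') (convex_Ici 0)
      (fun x hx => (hLderiv x hx).continuousAt.continuousWithinAt) ?_ ?_
    · intro x hx
      exact (hLderiv x (interior_subset hx)).hasDerivWithinAt
    · intro x hx
      have hx0 : 0 ≤ x := interior_subset hx
      have := hineq x hx0
      have h2 : 0 ≤ c * C₀ ^ (-p) * L x ^ (p + 1) := by
        have := hLnonneg x hx0
        positivity
      linarith
  have hposs : ∀ x ∈ Set.Icc 0 t, 0 < L x := fun x hx =>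
    hpos.trans_le (hanti hx.1 ht hx.2)
  have hd : ∀ x ∈ Set.Icc 0 t, HasDerivAt (fun s => L s ^ (-p) - p * c * C₀ ^ (-p) * s)
      (L' x * (-p) * L x ^ (-p - 1) - p * c * C₀ ^ (-p)) x := by
    intro x hx
    have := ((hLderiv x hx.1).rpow_const (p := -p) (Or.inl (hposs x hx).ne')).sub
      ((hasDerivAt_id x).const_mul (p * c * C₀ ^ (-p)))
    rw [mul_one] at this
    exact this
  have hmono : MonotoneOn (fun s => L s ^ (-p) - p * c * C₀ ^ (-p) * s) (Set.Icc 0 t) := by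
    refine monotoneOn_of_hasDerivWithinAt_nonneg (convex_Icc 0 t)
      (fun x hx => (hd x hx).continuousAt.continuousWithinAt)
      (fun x hx => (hd x (interior_subset hx)).hasDerivWithinAt) ?_
    intro x hx
    have hx' : x ∈ Set.Icc 0 t := interior_subset hx
    have hx1 := hposs x hx'
    have h3 : L x ^ (p + 1) * L x ^ (-p - 1) = 1 := by
      rw [← Real.rpow_add hx1]; simp
    have h4 : 0 < L x ^ (-p - 1) := by positivity
    have h5 := mul_nonneg (mul_nonneg hp.le h4.le) (neg_nonneg.2 (hineq x hx'.1))
    have h6 : p * L x ^ (-p - 1) * -(L' x + c * C₀ ^ (-p) * L x ^ (p + 1))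
      = L' x * (-p) * L x ^ (-p - 1)
        - p * c * C₀ ^ (-p) * (L x ^ (p + 1) * L x ^ (-p - 1)) := by ring
    rw [h6, h3, mul_one] at h5
    exact h5
  have hfin := hmono (Set.left_mem_Icc.2 ht) (Set.right_mem_Icc.2 ht) ht
  have hL0p : 0 < L 0 := hposs 0 (Set.left_mem_Icc.2 ht)
  have h7 : (1 + c * p * (L 0 / C₀) ^ p * t) * L 0 ^ (-p) ≤ L t ^ (-p) := by
    have h8 : (L 0 / C₀) ^ p * L 0 ^ (-p) = C₀ ^ (-p) := by
      rw [Real.div_rpow hL0 hC₀.le, Real.rpow_neg hL0, Real.rpow_neg hC₀.le]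
      have : 0 < L 0 ^ p := by positivity
      field_simp
    have h9 : (1 + c * p * (L 0 / C₀) ^ p * t) * L 0 ^ (-p)
      = L 0 ^ (-p) + p * c * ((L 0 / C₀) ^ p * L 0 ^ (-p)) * t := by ring
    rw [h9, h8]
    simp only [mul_zero, sub_zero] at hfin
    linarith
  have key : ∀ y : ℝ, 0 < y → (y ^ (-p)) ^ (-p⁻¹) = y := by
    intro y hy
    rw [← Real.rpow_mul hy.le, neg_mul_neg, mul_inv_cancel₀ hp.ne', Real.rpow_one]
  have h10 := Real.rpow_le_rpow_of_nonpos (z := -p⁻¹) (by positivity) h7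
    (by have := inv_pos.2 hp; linarith)
  rwa [Real.mul_rpow hbase.le (by positivity), key _ hpos, key _ hL0p] at h10
end

section
/- Let n₁, n₂ be nonnegative integers with n = n₁ + n₂. Let M₂₂ be an n₂×n₂ complex matrix whose kernel is trivial, and let N₂₁ be an n₂×n₁ complex matrix whose kernel is trivial. Let M be the n×n block matrix [[0, 0], [0, M₂₂]] and let N be any n×n block matrix of the form [[N₁₁, N₁₂], [N₂₁, N₂₂]]. Then the pair (N, M) satisfies the (SK) condition. -/
open Matrix

theorem sk_of_trivial_kernels (n₁ n₂ : ℕ)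
    (M₂₂ : Matrix (Fin n₂) (Fin n₂) ℂ)
    (hM₂₂ : ∀ x : Fin n₂ → ℂ, M₂₂.mulVec x = 0 → x = 0)
    (N₁₁ : Matrix (Fin n₁) (Fin n₁) ℂ) (N₁₂ : Matrix (Fin n₁) (Fin n₂) ℂ)
    (N₂₁ : Matrix (Fin n₂) (Fin n₁) ℂ) (N₂₂ : Matrix (Fin n₂) (Fin n₂) ℂ)
    (hN₂₁ : ∀ x : Fin n₁ → ℂ, N₂₁.mulVec x = 0 → x = 0) :
    SKCondition (Matrix.fromBlocks N₁₁ N₁₂ N₂₁ N₂₂)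
      (Matrix.fromBlocks 0 0 0 M₂₂) := by
  intro φ l hM hN
  have h2 : φ ∘ Sum.inr = 0 := by
    apply hM₂₂
    funext i
    have := congrFun hM (Sum.inr i)
    simpa [Matrix.fromBlocks_mulVec] using this
  have h1 : φ ∘ Sum.inl = 0 := by
    apply hN₂₁
    funext i
    have h := congrFun hN (Sum.inr i)
    have h3 : φ (Sum.inr i) = 0 := congrFun h2 i
    simpa [Matrix.fromBlocks_mulVec, h2, h3] using h
  funext i
  rcases i with i | i
  · exact congrFun h1 i
  · exact congrFun h2 i
end
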